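/- Consider the Hitting Set to Fault-Tolerant Path reduction: given universe 𝒰, family ℱ of subsets of 𝒰, and integer d, build an undirected graph with vertices u_x for x ∈ 𝒰, v_F for F ∈ ℱ, plus s and t; vulnerable edges {u_x, v_F} for x ∈ F and {v_F, t} for each F; safe edges {s, u_x} for each x; set ℓ = 2|ℱ| + d and k = |ℱ| - 1. Then 𝒰 has a hitting set of size at most d for ℱ if and only if the constructed Fault-Tolerant Path instance is a yes-instance. -/

import Mathlib

/-!
If `H` is a hitting set, choose `x_F ∈ H ∩ F` for each `F ∈ 𝓕` and let `K` consist of the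
safe edges at `H` and of the two edges `u_{x_F} v_F`, `v_F t` for each `F`. The `|𝓕|` paths
`s, u_{x_F}, v_F, t` share no vulnerable edge, so one of them survives `|𝓕| - 1` deletions
(`reduction_forward`).

Conversely let `K` be a solution, `S` the set of `x` with `s u_x ∈ K`, and call `F` hit if
`u_x v_F ∈ K` for some `x ∈ S`. Deleting the edges `v_G t` with `G ≠ F` shows that
`v_F t ∈ K` and that `v_F` has some neighbour `u_{y_F}` in `K`
(`exists_edges_of_faultTolerant`). The edges of `K` leaving `{s} ∪ {u_x : x ∈ S}` are all
vulnerable and separate `s` from `t`, so there are at least `|𝓕|` of them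
(`card_le_card_cut`). For an unhit `F` the edge `u_{y_F} v_F` is not among these. Hence
`|S| + |𝓕| + |𝓕| + #unhit ≤ |K| ≤ 2|𝓕| + d`, and `S` together with the elements `y_F` of the
unhit `F` is a hitting set of size at most `d` (`reduction_backward`). Looking at this one cut
avoids any appeal to Menger's theorem.
-/

/-- Vertices of the graph built in the Hitting Set to Fault-Tolerant Path
reduction: a source `s`, a sink `t`, a vertex `elem x` for each universe element
`x`, and a vertex `set F` for each member `F` of the family. -/
inductive HSV (U : Type*) where
  | s : HSV U
  | t : HSV U
  | elem : U → HSV U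
  | set : Finset U → HSV U
  deriving DecidableEq

namespace HSReduction

variable {U : Type*} [DecidableEq U]

/-! ### The constructed graph -/

/-- The vulnerable edges of the constructed graph. -/
abbrev vuln (𝓕 : Finset (Finset U)) : Finset (Sym2 (HSV U)) :=
  𝓕.biUnion (fun F => F.image (fun x => s(HSV.elem x, HSV.set F))) ∪
    𝓕.image (fun F => s(HSV.set F, HSV.t))

/-- The safe edges of the constructed graph. -/
abbrev safe (U : Type*) [Fintype U] [DecidableEq U] : Finset (Sym2 (HSV U)) :=
  Finset.univ.image (fun x : U => s(HSV.s, HSV.elem x))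

/-- The subgraph `K` tolerates the deletion of up to `|𝓕| - 1` vulnerable edges. -/
abbrev FaultTolerant (𝓕 : Finset (Finset U)) (K : Finset (Sym2 (HSV U))) : Prop :=
  ∀ D : Finset (Sym2 (HSV U)), D ⊆ K ∩ vuln 𝓕 → D.card ≤ 𝓕.card - 1 →
    (SimpleGraph.fromEdgeSet (↑(K \ D) : Set (Sym2 (HSV U)))).Reachable HSV.s HSV.t

/-- A vertex set closed under adjacency contains everything reachable from it. -/
lemma closed_of_reachable {V : Type*} {E : Set (Sym2 V)} {a b : V} (C : V → Prop)
    (hC : ∀ u v, s(u, v) ∈ E → C u → C v)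
    (h : (SimpleGraph.fromEdgeSet E).Reachable a b) (ha : C a) : C b := by
  obtain ⟨w⟩ := h
  induction w with
  | nil => exact ha
  | cons hadj _ ih => exact ih (hC _ _ ((SimpleGraph.fromEdgeSet_adj E).1 hadj).1 ha)

lemma mem_vuln_elem_set {𝓕 : Finset (Finset U)} {F : Finset U} {x : U} (hF : F ∈ 𝓕)
    (hx : x ∈ F) : s(HSV.elem x, HSV.set F) ∈ vuln 𝓕 :=
  Finset.mem_union_left _ (Finset.mem_biUnion.2 ⟨F, hF, Finset.mem_image_of_mem _ hx⟩)

/-- Every edge of the constructed graph has one of the three prescribed shapes. -/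
lemma edge_cases [Fintype U] {𝓕 : Finset (Finset U)} {e : Sym2 (HSV U)}
    (he : e ∈ safe U ∪ vuln 𝓕) :
    (∃ x, e = s(HSV.s, HSV.elem x)) ∨
      (∃ F ∈ 𝓕, ∃ x ∈ F, e = s(HSV.elem x, HSV.set F)) ∨
      ∃ F ∈ 𝓕, e = s(HSV.set F, HSV.t) := by
  simp only [Finset.mem_union, Finset.mem_image, Finset.mem_biUnion, Finset.mem_univ,
    true_and] at he
  rcases he with ⟨x, rfl⟩ | ⟨F, hF, x, hx, rfl⟩ | ⟨F, hF, rfl⟩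
  · exact Or.inl ⟨x, rfl⟩
  · exact Or.inr (Or.inl ⟨F, hF, x, hx, rfl⟩)
  · exact Or.inr (Or.inr ⟨F, hF, rfl⟩)

/-! ### From a hitting set to a solution -/

/-- A hitting set `H` yields a solution made of the safe edges at `H` and one path
`s, u_x, v_F, t` with `x ∈ H ∩ F` for each `F ∈ 𝓕`. -/
lemma reduction_forward [Fintype U] {𝓕 : Finset (Finset U)} (h𝓕 : 𝓕.Nonempty)
    {H : Finset U} (hH : ∀ F ∈ 𝓕, ∃ x ∈ H, x ∈ F) :
    ∃ K ⊆ safe U ∪ vuln 𝓕, K.card ≤ 2 * 𝓕.card + H.card ∧ FaultTolerant 𝓕 K := by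
  have : Nonempty U := by
    obtain ⟨F, hF⟩ := h𝓕
    exact ⟨(hH F hF).choose⟩
  choose! x hxH hxF using hH
  refine ⟨H.image (fun y => s(HSV.s, HSV.elem y)) ∪
    (𝓕.image (fun F => s(HSV.elem (x F), HSV.set F)) ∪
      𝓕.image (fun F => s(HSV.set F, HSV.t))), ?_, ?_, ?_⟩
  · refine Finset.union_subset_union (Finset.image_subset_image (Finset.subset_univ _))
      (Finset.union_subset ?_ ?_)
    · intro e he
      obtain ⟨F, hF, rfl⟩ := Finset.mem_image.1 he
      exact mem_vuln_elem_set hF (hxF F hF)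
    · exact Finset.subset_union_right
  · refine (Finset.card_union_le _ _).trans ?_
    have h1 := Finset.card_union_le (𝓕.image (fun F => s(HSV.elem (x F), HSV.set F)))
      (𝓕.image (fun F => s(HSV.set F, HSV.t)))
    have h2 := Finset.card_image_le (s := H) (f := fun y => s(HSV.s, HSV.elem y))
    have h3 := Finset.card_image_le (s := 𝓕) (f := fun F => s(HSV.elem (x F), HSV.set F))
    have h4 := Finset.card_image_le (s := 𝓕) (f := fun F => s(HSV.set F, HSV.t))
    omega
  · intro D hD hcard
    -- If every one of the `|𝓕|` paths lost an edge, these edges would be distinct members of `D`.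
    have key : ∃ F ∈ 𝓕, s(HSV.elem (x F), HSV.set F) ∉ D ∧ s(HSV.set F, HSV.t) ∉ D := by
      by_contra! hno
      have hle : 𝓕.card ≤ D.card := by
        refine Finset.card_le_card_of_injOn
          (fun F => if s(HSV.elem (x F), HSV.set F) ∈ D then s(HSV.elem (x F), HSV.set F)
            else s(HSV.set F, HSV.t)) ?_ ?_
        · intro F hF
          by_cases h : s(HSV.elem (x F), HSV.set F) ∈ D
          · simp [h]
          · simpa [h] using hno F hF h
        · intro F _ G _ hFG
          dsimp only at hFG
          split_ifs at hFG <;> simp_all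
      have := h𝓕.card_pos
      omega
    obtain ⟨F, hF, h1, h2⟩ := key
    have h0 : s(HSV.s, HSV.elem (x F)) ∉ D := fun h => by
      have := Finset.mem_of_mem_inter_right (hD h)
      simp at this
    have a1 : (SimpleGraph.fromEdgeSet (↑((H.image (fun y => s(HSV.s, HSV.elem y)) ∪
        (𝓕.image (fun F => s(HSV.elem (x F), HSV.set F)) ∪
          𝓕.image (fun F => s(HSV.set F, HSV.t)))) \ D) : Set (Sym2 (HSV U)))).Adj
        HSV.s (HSV.elem (x F)) := by
      rw [SimpleGraph.fromEdgeSet_adj]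
      refine ⟨Finset.mem_sdiff.2 ⟨Finset.mem_union_left _
        (Finset.mem_image.2 ⟨x F, hxH F hF, rfl⟩), h0⟩, by simp⟩
    refine a1.reachable.trans (SimpleGraph.Adj.reachable (v := HSV.set F) ?_ |>.trans
      (SimpleGraph.Adj.reachable ?_)) <;> rw [SimpleGraph.fromEdgeSet_adj]
    · exact ⟨Finset.mem_sdiff.2 ⟨Finset.mem_union_right _ (Finset.mem_union_left _
        (Finset.mem_image.2 ⟨F, hF, rfl⟩)), h1⟩, by simp⟩
    · exact ⟨Finset.mem_sdiff.2 ⟨Finset.mem_union_right _ (Finset.mem_union_right _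
        (Finset.mem_image.2 ⟨F, hF, rfl⟩)), h2⟩, by simp⟩

/-! ### From a solution to a hitting set -/

/-- Once the edges `v_G t` of `K` with `G ≠ F` are deleted, `t` must still be reached, and this
can only happen through `v_F`. -/
lemma exists_edges_of_faultTolerant [Fintype U] {𝓕 : Finset (Finset U)}
    {K : Finset (Sym2 (HSV U))} (hK : K ⊆ safe U ∪ vuln 𝓕) (hft : FaultTolerant 𝓕 K)
    {F : Finset U} (hF : F ∈ 𝓕) :
    s(HSV.set F, HSV.t) ∈ K ∧ ∃ y ∈ F, s(HSV.elem y, HSV.set F) ∈ K := by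
  set D := K ∩ (𝓕.erase F).image (fun G => s(HSV.set G, HSV.t)) with hD
  have hr := hft D
    (Finset.inter_subset_inter_left
      ((Finset.image_subset_image (Finset.erase_subset _ _)).trans Finset.subset_union_right))
    ((Finset.card_le_card Finset.inter_subset_right).trans
      (Finset.card_image_le.trans (Finset.card_erase_of_mem hF).le))
  have edge : ∀ G, s(HSV.set G, HSV.t) ∈ K \ D → G = F := by
    intro G hG
    obtain ⟨hGK, hGD⟩ := Finset.mem_sdiff.1 hG
    by_contra hne
    have hG𝓕 : G ∈ 𝓕 := by
      rcases edge_cases (hK hGK) with ⟨_, h⟩ | ⟨_, _, _, _, h⟩ | ⟨G', hG', h⟩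
      · simp at h
      · simp at h
      · have : G = G' := by simpa using h
        exact this ▸ hG'
    exact hGD (Finset.mem_inter.2 ⟨hGK,
      Finset.mem_image.2 ⟨G, Finset.mem_erase.2 ⟨hne, hG𝓕⟩, rfl⟩⟩)
  constructor
  · by_contra hn
    -- Without the edge `v_F t` the vertex `t` is isolated.
    refine closed_of_reachable (fun v => v ≠ HSV.t) ?_ hr (by simp) rfl
    rintro u v huv hu rfl
    have huv' : s(u, HSV.t) ∈ K \ D := huv
    have hm := (Finset.mem_sdiff.1 huv').1
    rcases edge_cases (hK hm) with ⟨_, h⟩ | ⟨_, _, _, _, h⟩ | ⟨G, hG, h⟩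
    · simp at h
    · simp at h
    · have hu : u = HSV.set G := by simpa using h
      subst hu
      exact hn (edge G huv' ▸ hm)
  · by_contra! hn
    -- Without an edge `u_y v_F` no edge leaves `{v_F, t}`.
    refine (closed_of_reachable (fun v => v ≠ HSV.t ∧ v ≠ HSV.set F) ?_ hr (by simp)).1 rfl
    rintro u v huv ⟨hu, hu'⟩
    have huv' : s(u, v) ∈ K \ D := huv
    have hm := (Finset.mem_sdiff.1 huv').1
    rcases edge_cases (hK hm) with ⟨x, h⟩ | ⟨G, hG, x, hx, h⟩ | ⟨G, hG, h⟩
    · rcases Sym2.eq_iff.1 h with ⟨rfl, rfl⟩ | ⟨rfl, rfl⟩ <;> simp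
    · rcases Sym2.eq_iff.1 h with ⟨rfl, rfl⟩ | ⟨rfl, rfl⟩
      · refine ⟨by simp, fun hGF => ?_⟩
        obtain rfl : G = F := by simpa using hGF
        exact hn x hx hm
      · simp
    · rcases Sym2.eq_iff.1 h with ⟨rfl, rfl⟩ | ⟨rfl, rfl⟩
      · exact absurd (congrArg HSV.set (edge G huv')) hu'
      · exact absurd rfl hu

open Classical in
/-- The edges of `K` leaving `{s} ∪ {u_x : s u_x ∈ K}` form a vulnerable `s`-`t` cut, which no
`|𝓕| - 1` deletions can exhaust. -/
lemma card_le_card_cut [Fintype U] {𝓕 : Finset (Finset U)}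
    {K : Finset (Sym2 (HSV U))} (hK : K ⊆ safe U ∪ vuln 𝓕) (hft : FaultTolerant 𝓕 K) :
    𝓕.card ≤ (K.filter (fun e => ∃ x F, e = s(HSV.elem x, HSV.set F) ∧
      s(HSV.s, HSV.elem x) ∈ K)).card := by
  set D := K.filter (fun e => ∃ x F, e = s(HSV.elem x, HSV.set F) ∧
      s(HSV.s, HSV.elem x) ∈ K) with hD
  by_contra! hlt
  have hr := hft D (fun e he => by
    obtain ⟨heK, x, F, rfl, _⟩ := Finset.mem_filter.1 he
    refine Finset.mem_inter.2 ⟨heK, ?_⟩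
    rcases Finset.mem_union.1 (hK heK) with h | h
    · simp at h
    · exact h) (by omega)
  have := closed_of_reachable
    (fun v => v = HSV.s ∨ ∃ x, v = HSV.elem x ∧ s(HSV.s, HSV.elem x) ∈ K) ?_ hr (Or.inl rfl)
  · simp at this
  · intro u v huv hu
    have huv' : s(u, v) ∈ K \ D := huv
    obtain ⟨hm, hnD⟩ := Finset.mem_sdiff.1 huv'
    rcases edge_cases (hK hm) with ⟨x, h⟩ | ⟨G, hG, x, hx, h⟩ | ⟨G, hG, h⟩
    · rcases Sym2.eq_iff.1 h with ⟨rfl, rfl⟩ | ⟨rfl, rfl⟩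
      · exact Or.inr ⟨x, rfl, hm⟩
      · exact Or.inl rfl
    · rcases Sym2.eq_iff.1 h with ⟨rfl, rfl⟩ | ⟨rfl, rfl⟩
      · rcases hu with hu | ⟨y, hy, hyK⟩
        · simp at hu
        · obtain rfl : x = y := by simpa using hy
          exact absurd (Finset.mem_filter.2 ⟨hm, x, G, rfl, hyK⟩) hnD
      · simp at hu
    · rcases Sym2.eq_iff.1 h with ⟨rfl, rfl⟩ | ⟨rfl, rfl⟩ <;> simp at hu

open Classical in
/-- From a solution `K`: the elements joined to `s` by safe edges of `K`, and one element of each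
unhit member of `𝓕`, paid for by an edge of `K` outside the cut of `card_le_card_cut`. -/
lemma reduction_backward [Fintype U] {𝓕 : Finset (Finset U)} (h𝓕 : 𝓕.Nonempty) {d : ℕ}
    {K : Finset (Sym2 (HSV U))} (hK : K ⊆ safe U ∪ vuln 𝓕)
    (hcard : K.card ≤ 2 * 𝓕.card + d) (hft : FaultTolerant 𝓕 K) :
    ∃ H : Finset U, H.card ≤ d ∧ ∀ F ∈ 𝓕, ∃ x ∈ H, x ∈ F := by
  have hE := fun F (hF : F ∈ 𝓕) => exists_edges_of_faultTolerant hK hft hF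
  have : Nonempty U := by
    obtain ⟨F, hF⟩ := h𝓕
    exact ⟨(hE F hF).2.choose⟩
  choose! y hyF hyK using fun F hF => (hE F hF).2
  set S : Finset U := Finset.univ.filter (fun x => s(HSV.s, HSV.elem x) ∈ K) with hS
  -- The unhit members of the family.
  set W := 𝓕.filter (fun F => ∀ x ∈ S, x ∈ F → s(HSV.elem x, HSV.set F) ∉ K) with hW
  have hyS : ∀ F ∈ W, s(HSV.s, HSV.elem (y F)) ∉ K := by
    intro F hF h
    obtain ⟨hF𝓕, hF'⟩ := Finset.mem_filter.1 hF
    exact hF' (y F) (by simpa [hS] using h) (hyF F hF𝓕) (hyK F hF𝓕)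
  refine ⟨S ∪ W.image y, ?_, ?_⟩
  · set A := S.image (fun x => s(HSV.s, HSV.elem x)) with hA
    set B := 𝓕.image (fun F => s(HSV.set F, HSV.t)) with hB
    set C := K.filter (fun e => ∃ x F, e = s(HSV.elem x, HSV.set F) ∧
      s(HSV.s, HSV.elem x) ∈ K) with hC
    set P := W.image (fun F => s(HSV.elem (y F), HSV.set F)) with hP
    have cA : A.card = S.card := Finset.card_image_of_injective _ (fun a b h => by simpa using h)
    have cB : B.card = 𝓕.card := Finset.card_image_of_injective _ (fun a b h => by simpa using h)
    have cP : P.card = W.card := Finset.card_image_of_injective _ (fun a b h => by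
      have h' : y a = y b ∧ a = b := by simpa using h
      exact h'.2)
    have cC : 𝓕.card ≤ C.card := card_le_card_cut hK hft
    have dCP : Disjoint C P := by
      rw [Finset.disjoint_left]
      intro e heC heP
      obtain ⟨F, hF, rfl⟩ := Finset.mem_image.1 heP
      obtain ⟨_, x, G, h, hx⟩ := Finset.mem_filter.1 heC
      have h' : y F = x ∧ F = G := by simpa using h
      exact hyS F hF (h'.1 ▸ hx)
    have dB : Disjoint B (C ∪ P) := by
      rw [Finset.disjoint_left]
      intro e heB he
      obtain ⟨F, hF, rfl⟩ := Finset.mem_image.1 heB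
      simp [hC, hP] at he
    have dA : Disjoint A (B ∪ (C ∪ P)) := by
      rw [Finset.disjoint_left]
      intro e heA he
      obtain ⟨x, hx, rfl⟩ := Finset.mem_image.1 heA
      simp [hB, hC, hP] at he
    have hsub : A ∪ (B ∪ (C ∪ P)) ⊆ K := by
      refine Finset.union_subset ?_ (Finset.union_subset ?_
        (Finset.union_subset (Finset.filter_subset _ _) ?_))
      · intro e he
        obtain ⟨x, hx, rfl⟩ := Finset.mem_image.1 he
        exact (Finset.mem_filter.1 hx).2
      · intro e he
        obtain ⟨F, hF, rfl⟩ := Finset.mem_image.1 he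
        exact (hE F hF).1
      · intro e he
        obtain ⟨F, hF, rfl⟩ := Finset.mem_image.1 he
        exact hyK F (Finset.mem_filter.1 hF).1
    have hle := Finset.card_le_card hsub
    rw [Finset.card_union_of_disjoint dA, Finset.card_union_of_disjoint dB,
      Finset.card_union_of_disjoint dCP] at hle
    have h1 := Finset.card_union_le S (W.image y)
    have h2 := Finset.card_image_le (s := W) (f := y)
    omega
  · intro F hF
    by_cases hFW : F ∈ W
    · exact ⟨y F, Finset.mem_union_right _ (Finset.mem_image_of_mem _ hFW), hyF F hF⟩
    · have : ∃ x ∈ S, x ∈ F ∧ s(HSV.elem x, HSV.set F) ∈ K := by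
        by_contra! h
        exact hFW (Finset.mem_filter.2 ⟨hF, h⟩)
      obtain ⟨x, hxS, hxF, _⟩ := this
      exact ⟨x, Finset.mem_union_left _ hxS, hxF⟩

end HSReduction

/-- Hitting Set to Fault-Tolerant Path reduction: vertices `u_x` (`x ∈ 𝒰`), `v_F`
(`F ∈ 𝓕`), `s`, `t`; vulnerable edges `{u_x, v_F}` for `x ∈ F` and `{v_F, t}` for
each `F ∈ 𝓕`; safe edges `{s, u_x}` for each `x`; `ℓ = 2|𝓕| + d`, `k = |𝓕| - 1`.
Then `𝒰` has a hitting set of size at most `d` for `𝓕` iff the constructed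
Fault-Tolerant Path instance is a yes-instance. -/
theorem stmt_15 {U : Type*} [Fintype U] [DecidableEq U]
    (𝓕 : Finset (Finset U)) (h𝓕 : 𝓕.Nonempty) (d : ℕ) :
    (∃ H : Finset U, H.card ≤ d ∧ ∀ F ∈ 𝓕, ∃ x ∈ H, x ∈ F) ↔
      (∃ K : Finset (Sym2 (HSV U)),
        K ⊆ (Finset.univ.image (fun x : U => s(HSV.s, HSV.elem x)) ∪
              (𝓕.biUnion (fun F => F.image (fun x => s(HSV.elem x, HSV.set F))) ∪
                𝓕.image (fun F => s(HSV.set F, HSV.t)))) ∧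
        K.card ≤ 2 * 𝓕.card + d ∧
        ∀ F : Finset (Sym2 (HSV U)),
          F ⊆ K ∩ (𝓕.biUnion (fun F => F.image (fun x => s(HSV.elem x, HSV.set F))) ∪
              𝓕.image (fun F => s(HSV.set F, HSV.t))) →
          F.card ≤ 𝓕.card - 1 →
            (SimpleGraph.fromEdgeSet (↑(K \ F) : Set (Sym2 (HSV U)))).Reachable
              HSV.s HSV.t) := by
  constructor
  · rintro ⟨H, hHd, hH⟩
    obtain ⟨K, hK, hc, hft⟩ := HSReduction.reduction_forward h𝓕 hH
    exact ⟨K, hK, by omega, hft⟩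
  · rintro ⟨K, hK, hc, hft⟩
    exact HSReduction.reduction_backward h𝓕 hK hc hft
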